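/- Let f ∈ 𝒟 be such that Re f(z) ≥ 1 for every z ∈ D. Set a = e^{−1/f(0)} and σ = φ_a ∘ exp(−1/f), where φ_a(z) = (z − a)/(1 − ā z). Then σ is an analytic self-map of D with σ(0) = 0, σ ∈ 𝒟_*, and the composition operator C_σ is Hilbert–Schmidt on 𝒟_*. -/

import Mathlib

/-!
Put `g = exp (-1/f)`. With `u = Re (1/f) = Re f / |f|²`, so that `|f|⁻² ≤ u`, the inequality
`u ≤ sinh u` gives `|g'| = e^{-u} |f'| / |f|² ≤ (1 - |g|²) |f'|` (`exp_neg_inv_bound`). The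
hyperbolic derivative `|g'| / (1 - |g|²)` is invariant under the disk automorphism `φ_a`
(`pick_identity`), hence also `|σ'| ≤ (1 - |σ|²) |f'|`, and everything follows from `f ∈ 𝒟`
(`hilbertSchmidt_of_hyperbolic_deriv`):

* summing `Σ (n+1) |σ|^{2n} |σ'|² = |σ'|² / (1 - |σ|²)²` under the integral bounds the
  Hilbert–Schmidt sum over the basis `zⁿ/√n` by `∫ |f'|² dA`;
* the point evaluation estimate `((1 - |w|²) |h'(w)|)² ≤ 4 ‖h‖²` (`deriv_bound`), a consequence of
  the sub-mean value property of `|h'|²` on the disk of centre `w` and radius `1 - |w|`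
  (`disk_submean`), gives `‖h ∘ σ‖² ≤ 4 ‖h‖² ∫ |f'|² dA`, which is the boundedness of `C_σ`.
-/

open Complex MeasureTheory Metric Set Filter Topology
open scoped ENNReal NNReal

noncomputable section

/-- Normalized area measure `dA = dx dy / π` on `ℂ`. -/
def nA : Measure ℂ := (ENNReal.ofReal Real.pi)⁻¹ • volume

/-- The open unit disk `D ⊆ ℂ`. -/
def uD : Set ℂ := Metric.ball (0 : ℂ) 1

/-- A Schur function: an analytic self-map of the open unit disk. -/
def IsSchur (φ : ℂ → ℂ) : Prop :=
  DifferentiableOn ℂ φ uD ∧ Set.MapsTo φ uD uD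

/-- Squared norm of `f` in the weighted Dirichlet space `𝒟_α`, with value in `[0,∞]`:
`‖f‖_α² = |f(0)|² + (α+1) ∫_D |f′(z)|² (1−|z|²)^α dA(z)`. -/
def eDNormSqW (α : ℝ) (f : ℂ → ℂ) : ℝ≥0∞ :=
  ENNReal.ofReal (‖f 0‖ ^ 2) +
    ∫⁻ z in uD, ENNReal.ofReal ((α + 1) * ‖deriv f z‖ ^ 2 * (1 - ‖z‖ ^ 2) ^ α) ∂nA

/-- Squared Dirichlet norm: `‖f‖² = |f(0)|² + ∫_D |f′(z)|² dA(z)`. -/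
def eDNormSq (f : ℂ → ℂ) : ℝ≥0∞ := eDNormSqW 0 f

/-- Membership in the weighted Dirichlet space `𝒟_α`. -/
def MemDW (α : ℝ) (f : ℂ → ℂ) : Prop :=
  DifferentiableOn ℂ f uD ∧ eDNormSqW α f < ⊤

/-- Membership in `𝒟_{α,*}`. -/
def MemDWStar (α : ℝ) (f : ℂ → ℂ) : Prop := MemDW α f ∧ f 0 = 0

/-- Membership in the Dirichlet space `𝒟`. -/
def MemD (f : ℂ → ℂ) : Prop := MemDW 0 f

/-- Membership in `𝒟_*`. -/
def MemDStar (f : ℂ → ℂ) : Prop := MemDWStar 0 f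

/-- The composition operator `C_φ f = f ∘ φ`. -/
def compOp (φ : ℂ → ℂ) : (ℂ → ℂ) → ℂ → ℂ := fun f z => f (φ z)

/-- Operator norm of `T` with respect to the space `{f | Mem f}` with squared norm `NSq`:
the least `C` such that `‖T f‖² ≤ C² ‖f‖²` for all `f` in the space (`⊤` if none). -/
def eOpNorm (Mem : (ℂ → ℂ) → Prop) (NSq : (ℂ → ℂ) → ℝ≥0∞)
    (T : (ℂ → ℂ) → ℂ → ℂ) : ℝ≥0∞ :=
  sInf {C : ℝ≥0∞ | ∀ f, Mem f → NSq (T f) ≤ C ^ 2 * NSq f}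

/-- The `n`-th approximation number `a_n(T) = inf {‖T − R‖ : rank R < n}`. -/
def eApproxNum (Mem : (ℂ → ℂ) → Prop) (NSq : (ℂ → ℂ) → ℝ≥0∞)
    (T : (ℂ → ℂ) → ℂ → ℂ) (n : ℕ) : ℝ≥0∞ :=
  sInf {c : ℝ≥0∞ | ∃ R : (ℂ → ℂ) →ₗ[ℂ] (ℂ → ℂ),
    Module.rank ℂ (LinearMap.range R) < (n : Cardinal) ∧
    c = eOpNorm Mem NSq (fun f z => T f z - R f z)}

/-- `T` is a bounded operator on the space `{f | Mem f}` with squared norm `NSq`. -/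
def IsBoundedOpOn (Mem : (ℂ → ℂ) → Prop) (NSq : (ℂ → ℂ) → ℝ≥0∞)
    (T : (ℂ → ℂ) → ℂ → ℂ) : Prop :=
  (∀ f, Mem f → Mem (T f)) ∧ eOpNorm Mem NSq T ≠ ⊤

/-- `T` is a compact operator on the space `{f | Mem f}`: it is bounded and its
approximation numbers tend to `0` (the standard characterization of compactness
for operators on a Hilbert space). -/
def IsCompactOpOn (Mem : (ℂ → ℂ) → Prop) (NSq : (ℂ → ℂ) → ℝ≥0∞)
    (T : (ℂ → ℂ) → ℂ → ℂ) : Prop :=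
  IsBoundedOpOn Mem NSq T ∧
    Filter.Tendsto (fun n => eApproxNum Mem NSq T n) Filter.atTop (𝓝 0)

/-- `T` belongs to the Schatten class `S_p` of the space `{f | Mem f}`:
`Σ_{n≥1} a_n(T)^p < ∞`. -/
def MemSchattenOn (Mem : (ℂ → ℂ) → Prop) (NSq : (ℂ → ℂ) → ℝ≥0∞)
    (T : (ℂ → ℂ) → ℂ → ℂ) (p : ℝ) : Prop :=
  IsBoundedOpOn Mem NSq T ∧
    ∑' n : ℕ, (eApproxNum Mem NSq T (n + 1)) ^ p ≠ ⊤

/-- `C_φ` belongs to the Schatten class `S_p(𝒟_*)`. -/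
def MemSchattenD (p : ℝ) (φ : ℂ → ℂ) : Prop :=
  MemSchattenOn MemDStar eDNormSq (compOp φ) p

/-- `C_φ` is a Hilbert–Schmidt operator on `𝒟_*`: it is bounded and
`Σ_n ‖C_φ e_n‖² < ∞` for the orthonormal basis `e_n(z) = zⁿ/√n`, `n ≥ 1`, of `𝒟_*`
(equivalently, for every orthonormal basis). -/
def HilbertSchmidtOnDStar (φ : ℂ → ℂ) : Prop :=
  IsBoundedOpOn MemDStar eDNormSq (compOp φ) ∧
    ∑' n : ℕ, eDNormSq (fun z => φ z ^ (n + 1) / (Real.sqrt (n + 1) : ℂ)) ≠ ⊤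

/-- Squared Hardy norm `‖f‖² = sup_{0≤r<1} (1/2π) ∫_0^{2π} |f(r e^{it})|² dt`. -/
def eHardyNormSq (f : ℂ → ℂ) : ℝ≥0∞ :=
  ⨆ r : Set.Ico (0 : ℝ) 1,
    (∫⁻ t in Set.Ioc 0 (2 * Real.pi),
      ENNReal.ofReal (‖f ((r : ℝ) * Complex.exp (t * Complex.I))‖ ^ 2)) /
        ENNReal.ofReal (2 * Real.pi)

/-- Membership in the Hardy space `H²`. -/
def MemHardy (f : ℂ → ℂ) : Prop := DifferentiableOn ℂ f uD ∧ eHardyNormSq f < ⊤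

/-- Squared Bergman norm `‖f‖² = ∫_D |f|² dA`. -/
def eBergNormSq (f : ℂ → ℂ) : ℝ≥0∞ := ∫⁻ z in uD, ENNReal.ofReal (‖f z‖ ^ 2) ∂nA

/-- Membership in the Bergman space `𝔅²`. -/
def MemBerg (f : ℂ → ℂ) : Prop := DifferentiableOn ℂ f uD ∧ eBergNormSq f < ⊤

/-- The logarithmic energy `I_μ = ∬ log(e/|z−w|) dμ(z) dμ(w)` of a measure on the circle. -/
def eEnergy (μ : Measure ℂ) : ℝ≥0∞ :=
  ∫⁻ z, ∫⁻ w, ENNReal.ofReal (Real.log (Real.exp 1 / dist z w)) ∂μ ∂μ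

/-- A Borel set `E` (contained in the unit circle) has logarithmic capacity zero iff
`I_μ = ∞` for every Borel probability measure `μ` with compact support contained in `E`. -/
def HasLogCapacityZero (E : Set ℂ) : Prop :=
  ∀ μ : Measure ℂ, IsProbabilityMeasure μ →
    (∃ K, IsCompact K ∧ K ⊆ E ∧ μ Kᶜ = 0) → eEnergy μ = ⊤

/-- The weighted Nevanlinna counting function `N_{φ,α}(w) = Σ_{z∈D, φ(z)=w} (1−|z|²)^α`. -/
def nevanlinnaE (φ : ℂ → ℂ) (α : ℝ) (w : ℂ) : ℝ≥0∞ :=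
  ∑' z : {z : ℂ // z ∈ uD ∧ φ z = w}, ENNReal.ofReal ((1 - ‖(z : ℂ)‖ ^ 2) ^ α)

/-- The Carleson window `W(ξ,h)`. -/
def carlesonW (ξ : ℂ) (h : ℝ) : Set ℂ :=
  {w ∈ uD | 1 - ‖w‖ ≤ h ∧ |Complex.arg (w * (starRingEnd ℂ) ξ)| ≤ Real.pi * h}

/-- Argument normalized to lie in `[0, 2π)`. -/
def argNN (z : ℂ) : ℝ :=
  if 0 ≤ Complex.arg z then Complex.arg z else Complex.arg z + 2 * Real.pi

/-- The Hastings–Luecking window `R_{n,j}`. -/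
def HLwindow (n j : ℕ) : Set ℂ :=
  {z ∈ uD | 1 - ((2 : ℝ) ^ n)⁻¹ ≤ ‖z‖ ∧ ‖z‖ < 1 - ((2 : ℝ) ^ (n + 1))⁻¹ ∧
    2 * j * Real.pi / 2 ^ n ≤ argNN z ∧ argNN z < 2 * (j + 1) * Real.pi / 2 ^ n}

/-- `g` is an a.e. radial limit function of `φ`:
for a.e. `t`, `φ(r e^{it}) → g(t)` as `r → 1⁻`. -/
def IsRadialLimit (φ : ℂ → ℂ) (g : ℝ → ℂ) : Prop :=
  ∀ᵐ t : ℝ, Filter.Tendsto (fun r : ℝ => φ ((r : ℂ) * Complex.exp (t * Complex.I)))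
    (𝓝[<] (1 : ℝ)) (𝓝 (g t))

/-! ### Sub-mean value property and point evaluation of derivatives -/

theorem setLIntegral_ofReal_id (R : ℝ) (hR : 0 ≤ R) :
    ∫⁻ r in Ioo 0 R, ENNReal.ofReal r = ENNReal.ofReal (R ^ 2 / 2) := by
  rw [← ofReal_integral_eq_lintegral_ofReal]
  · rw [← integral_Ioc_eq_integral_Ioo, ← intervalIntegral.integral_of_le hR]
    simp
  · exact (continuous_id.integrableOn_Icc (a := 0) (b := R)).mono_set Ioo_subset_Icc_self
  · filter_upwards [ae_restrict_mem measurableSet_Ioo] with r hr using hr.1.le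

/-- The mean value property on a circle, as an inequality between norms. -/
theorem circle_submean {F : ℂ → ℂ} {w : ℂ} {r R : ℝ} (hr : 0 < r) (hrR : r < R)
    (hd : DifferentiableOn ℂ F (ball w R)) :
    ENNReal.ofReal (2 * Real.pi) * ‖F w‖ₑ ≤
      ∫⁻ θ in Ioo (-Real.pi) Real.pi, ‖F (w + Complex.polarCoord.symm (r, θ))‖ₑ := by
  have hpi := Real.pi_pos
  have hcl : DiffContOnCl ℂ F (ball w |r|) := by
    apply DifferentiableOn.diffContOnCl
    rw [abs_of_pos hr]
    exact hd.mono (closure_ball_subset_closedBall.trans (closedBall_subset_ball hrR))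
  have h1 := hcl.circleAverage
  rw [Real.circleAverage_eq_integral_add (-Real.pi)] at h1
  rw [intervalIntegral.integral_comp_add_right (fun θ => F (circleMap w r θ)),
    show (0 : ℝ) + -Real.pi = -Real.pi by ring, show 2 * Real.pi + -Real.pi = Real.pi by ring,
    intervalIntegral.integral_of_le (by linarith), integral_Ioc_eq_integral_Ioo] at h1
  have h2 : (∫ θ in Ioo (-Real.pi) Real.pi, F (circleMap w r θ)) = (2 * Real.pi : ℝ) • F w := by
    rw [← h1, smul_smul, mul_inv_cancel₀ (by positivity), one_smul]
  have h3 := enorm_integral_le_lintegral_enorm (μ := volume.restrict (Ioo (-Real.pi) Real.pi))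
    (fun θ => F (circleMap w r θ))
  rw [h2, enorm_smul, Real.enorm_eq_ofReal (by positivity)] at h3
  refine h3.trans_eq ?_
  refine lintegral_congr fun θ => ?_
  rw [Complex.polarCoord_symm_apply, circleMap, Complex.exp_mul_I]
  simp

/-- The sub-mean value property over a disk: integrate `circle_submean` in polar coordinates. -/
theorem disk_submean {F : ℂ → ℂ} (hm : Measurable F) {w : ℂ} {R : ℝ} (hR : 0 ≤ R)
    (hd : DifferentiableOn ℂ F (ball w R)) :
    ENNReal.ofReal (Real.pi * R ^ 2) * ‖F w‖ₑ ≤ ∫⁻ z in ball w R, ‖F z‖ₑ := by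
  set G : ℂ → ℝ≥0∞ := (ball w R).indicator (fun z => ‖F z‖ₑ) with hG
  have hGm : Measurable G := hm.enorm.indicator measurableSet_ball
  have hsymm : Measurable (fun p : ℝ × ℝ => Complex.polarCoord.symm p) := by
    simp only [Complex.polarCoord_symm_apply]
    fun_prop
  have e1 : ∫⁻ z in ball w R, ‖F z‖ₑ = ∫⁻ z, G (w + z) := by
    rw [← lintegral_indicator measurableSet_ball, lintegral_add_left_eq_self G w]
  rw [e1, ← Complex.lintegral_comp_polarCoord_symm]
  have ht : polarCoord.target = Ioi (0 : ℝ) ×ˢ Ioo (-Real.pi) Real.pi := rfl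
  rw [ht, Measure.volume_eq_prod, ← Measure.prod_restrict, lintegral_prod]
  swap
  · refine Measurable.aemeasurable ?_
    exact (ENNReal.measurable_ofReal.comp measurable_fst).mul
      (hGm.comp (measurable_const.add hsymm))
  calc ENNReal.ofReal (Real.pi * R ^ 2) * ‖F w‖ₑ
      = ∫⁻ r in Ioo 0 R, ENNReal.ofReal r * (ENNReal.ofReal (2 * Real.pi) * ‖F w‖ₑ) := by
        rw [lintegral_mul_const _ ENNReal.measurable_ofReal, setLIntegral_ofReal_id R hR,
          ← mul_assoc, ← ENNReal.ofReal_mul (by positivity)]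
        congr 2
        ring
    _ ≤ ∫⁻ r in Ioo 0 R, ∫⁻ θ in Ioo (-Real.pi) Real.pi,
          ENNReal.ofReal r • G (w + Complex.polarCoord.symm (r, θ)) := by
        refine setLIntegral_mono' measurableSet_Ioo fun r hr => ?_
        simp only [smul_eq_mul]
        rw [lintegral_const_mul' _ _ ENNReal.ofReal_ne_top]
        gcongr
        refine (circle_submean hr.1 hr.2 hd).trans_eq ?_
        refine lintegral_congr fun θ => ?_
        rw [hG, indicator_of_mem]
        rw [mem_ball, dist_eq_norm, add_sub_cancel_left, Complex.norm_polarCoord_symm,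
          abs_of_pos hr.1]
        exact hr.2
    _ ≤ _ := lintegral_mono_set Ioo_subset_Ioi_self

theorem eDNormSq_eq (f : ℂ → ℂ) :
    eDNormSq f = ENNReal.ofReal (‖f 0‖ ^ 2) + ∫⁻ z in uD, ENNReal.ofReal (‖deriv f z‖ ^ 2) ∂nA := by
  simp [eDNormSq, eDNormSqW]

/-- Boundedness of point evaluation of the derivative on the Dirichlet space. -/
theorem deriv_bound {h : ℂ → ℂ} (hd : DifferentiableOn ℂ h uD) {w : ℂ} (hw : w ∈ uD) :
    ENNReal.ofReal (((1 - ‖w‖ ^ 2) * ‖deriv h w‖) ^ 2) ≤ 4 * eDNormSq h := by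
  have hw1 : ‖w‖ < 1 := by simpa [uD] using hw
  have hsub : ball w (1 - ‖w‖) ⊆ uD := by
    apply ball_subset_ball'
    simp
  have hdd : DifferentiableOn ℂ (deriv h) uD := hd.deriv isOpen_ball
  have key := disk_submean (F := fun z => deriv h z ^ 2) ((measurable_deriv h).pow_const 2)
    (sub_nonneg.2 hw1.le) ((hdd.mono hsub).pow 2)
  have hpi0 : ENNReal.ofReal Real.pi ≠ 0 := by simp [Real.pi_pos]
  have en : ∀ z, ‖deriv h z ^ 2‖ₑ = ENNReal.ofReal (‖deriv h z‖ ^ 2) := fun z => by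
    rw [← norm_pow, ofReal_norm]
  simp only [en] at key
  have k2 : ENNReal.ofReal ((1 - ‖w‖) ^ 2 * ‖deriv h w‖ ^ 2) ≤
      ∫⁻ z in uD, ENNReal.ofReal (‖deriv h z‖ ^ 2) ∂nA := by
    rw [nA, Measure.restrict_smul, lintegral_smul_measure, smul_eq_mul]
    rw [mul_comm _ (lintegral _ _), ← div_eq_mul_inv, ENNReal.le_div_iff_mul_le (Or.inl hpi0)
      (Or.inl ENNReal.ofReal_ne_top), mul_comm, ← ENNReal.ofReal_mul Real.pi_pos.le, ← mul_assoc,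
      ENNReal.ofReal_mul (by positivity)]
    exact key.trans (lintegral_mono_set hsub)
  calc _ ≤ ENNReal.ofReal (4 * ((1 - ‖w‖) ^ 2 * ‖deriv h w‖ ^ 2)) := by
        apply ENNReal.ofReal_le_ofReal
        have h0 := norm_nonneg w
        have : (1 - ‖w‖ ^ 2) ^ 2 ≤ 4 * (1 - ‖w‖) ^ 2 := by
          have : (1 - ‖w‖ ^ 2) ≤ 2 * (1 - ‖w‖) := by nlinarith
          have h3 : 0 ≤ 1 - ‖w‖ ^ 2 := by nlinarith
          nlinarith
        rw [mul_pow, ← mul_assoc]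
        gcongr
    _ = 4 * ENNReal.ofReal ((1 - ‖w‖) ^ 2 * ‖deriv h w‖ ^ 2) := by
        rw [ENNReal.ofReal_mul (by norm_num)]
        simp
    _ ≤ _ := by
        rw [eDNormSq_eq]
        gcongr
        exact k2.trans le_add_self

/-! ### Hilbert–Schmidt criterion via the hyperbolic derivative -/

/-- The pointwise form of `Σ (n+1) t^(2n) = (1-t²)⁻²` for the images of the basis `zⁿ/√n`. -/
theorem tsum_deriv_pow {σ : ℂ → ℂ} {z : ℂ} (hσ : DifferentiableAt ℂ σ z) (hz : ‖σ z‖ < 1) :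
    ∑' n : ℕ, ENNReal.ofReal
        (‖deriv (fun z => σ z ^ (n + 1) / (Real.sqrt (n + 1) : ℂ)) z‖ ^ 2) =
      ENNReal.ofReal ((‖deriv σ z‖ / (1 - ‖σ z‖ ^ 2)) ^ 2) := by
  have h0 := norm_nonneg (σ z)
  have ht : ‖(‖σ z‖ ^ 2 : ℝ)‖ < 1 := by
    rw [Real.norm_of_nonneg (by positivity)]
    nlinarith
  have hs := (hasSum_choose_mul_geometric_of_norm_lt_one 1 ht).mul_right (‖deriv σ z‖ ^ 2)
  have e : ∀ n : ℕ, ‖deriv (fun z => σ z ^ (n + 1) / (Real.sqrt (n + 1) : ℂ)) z‖ ^ 2 =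
      ((n + 1).choose 1 : ℝ) * (‖σ z‖ ^ 2) ^ n * ‖deriv σ z‖ ^ 2 := by
    intro n
    have hd := ((hσ.hasDerivAt.pow (n + 1)).div_const (Real.sqrt (n + 1) : ℂ)).deriv
    have hd' : deriv (fun z => σ z ^ (n + 1) / (Real.sqrt (n + 1) : ℂ)) z = _ := hd
    rw [hd']
    have hn : (0 : ℝ) < (n : ℝ) + 1 := by positivity
    have hsq : Real.sqrt (n + 1) ^ 2 = (n : ℝ) + 1 := Real.sq_sqrt hn.le
    rw [norm_div, norm_mul, norm_mul, div_pow, Complex.norm_real, Complex.norm_natCast,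
      Real.norm_of_nonneg (Real.sqrt_nonneg _), hsq, norm_pow]
    simp only [Nat.choose_one_right, Nat.add_sub_cancel]
    push_cast
    field_simp
    ring
  simp only [e]
  rw [← ENNReal.ofReal_tsum_of_nonneg (fun n => by positivity) hs.summable, hs.tsum_eq]
  congr 1
  rw [div_pow]
  ring

/-- A self-map of the disk fixing `0` whose hyperbolic derivative is dominated by the derivative
of a function of finite Dirichlet norm induces a Hilbert–Schmidt composition operator. -/
theorem hilbertSchmidt_of_hyperbolic_deriv {f σ : ℂ → ℂ} (hf : MemD f) (hS : IsSchur σ)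
    (h0 : σ 0 = 0)
    (hb : ∀ z ∈ uD, ‖deriv σ z‖ ≤ (1 - ‖σ z‖ ^ 2) * ‖deriv f z‖) :
    MemDStar σ ∧ HilbertSchmidtOnDStar σ := by
  have hm : MeasurableSet uD := measurableSet_ball
  have hnorm : ∀ z ∈ uD, ‖σ z‖ < 1 := fun z hz => by simpa [uD] using hS.2 hz
  have hdiff : ∀ z ∈ uD, DifferentiableAt ℂ σ z := fun z hz =>
    hS.1.differentiableAt (isOpen_ball.mem_nhds hz)
  set E : ℝ≥0∞ := ∫⁻ z in uD, ENNReal.ofReal (‖deriv f z‖ ^ 2) ∂nA with hE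
  have hEfin : E ≠ ⊤ := by
    have h1 : eDNormSq f < ⊤ := hf.2
    rw [eDNormSq_eq] at h1
    exact (le_add_self.trans_lt h1).ne
  have hσE : eDNormSq σ ≤ E := by
    rw [eDNormSq_eq, h0]
    simp only [norm_zero, ne_eq, OfNat.ofNat_ne_zero, not_false_eq_true, zero_pow,
      ENNReal.ofReal_zero, zero_add]
    refine setLIntegral_mono' hm fun z hz => ENNReal.ofReal_le_ofReal ?_
    have h2 := hb z hz
    gcongr
    refine h2.trans (mul_le_of_le_one_left (norm_nonneg _) ?_)
    nlinarith [norm_nonneg (σ z)]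
  -- `‖h ∘ σ‖² = ∫ |h'(σ)|² |σ'|² ≤ ∫ (|h'(σ)| (1 - |σ|²))² |f'|² ≤ 4 ‖h‖² ∫ |f'|²`
  have hcomp : ∀ h, MemDStar h → eDNormSq (compOp σ h) ≤ 4 * E * eDNormSq h := by
    intro h hh
    have hfin : eDNormSq h ≠ ⊤ := hh.1.2.ne
    have hz0 : compOp σ h 0 = 0 := by simp [compOp, h0, hh.2]
    rw [eDNormSq_eq (compOp σ h), hz0]
    simp only [norm_zero, ne_eq, OfNat.ofNat_ne_zero, not_false_eq_true, zero_pow,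
      ENNReal.ofReal_zero, zero_add]
    rw [show 4 * E * eDNormSq h = 4 * eDNormSq h * E by ring, hE,
      ← lintegral_const_mul' _ _ (ENNReal.mul_ne_top (by simp) hfin)]
    refine setLIntegral_mono' hm fun z hz => ?_
    have hσz := hS.2 hz
    have hdh : DifferentiableAt ℂ h (σ z) := hh.1.1.differentiableAt (isOpen_ball.mem_nhds hσz)
    have hder : deriv (compOp σ h) z = deriv h (σ z) * deriv σ z :=
      (hdh.hasDerivAt.comp z (hdiff z hz).hasDerivAt).deriv
    calc ENNReal.ofReal (‖deriv (compOp σ h) z‖ ^ 2)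
        ≤ ENNReal.ofReal (((1 - ‖σ z‖ ^ 2) * ‖deriv h (σ z)‖) ^ 2 * ‖deriv f z‖ ^ 2) := by
          apply ENNReal.ofReal_le_ofReal
          rw [hder, norm_mul, ← mul_pow]
          refine pow_le_pow_left₀ (by positivity) ?_ 2
          calc _ ≤ ‖deriv h (σ z)‖ * ((1 - ‖σ z‖ ^ 2) * ‖deriv f z‖) := by
                gcongr
                exact hb z hz
            _ = _ := by ring
      _ ≤ _ := by
          rw [ENNReal.ofReal_mul (by positivity)]
          gcongr
          exact deriv_bound hh.1.1 hσz
  refine ⟨⟨⟨hS.1, hσE.trans_lt hEfin.lt_top⟩, h0⟩, ⟨fun h hh => ⟨⟨?_, ?_⟩, ?_⟩, ?_⟩, ?_⟩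
  · exact hh.1.1.comp hS.1 hS.2
  · exact (hcomp h hh).trans_lt
      (ENNReal.mul_lt_top (ENNReal.mul_lt_top (by simp) hEfin.lt_top) hh.1.2)
  · simp [compOp, h0, hh.2]
  ·
    -- `4E + 1` is an admissible bound since it is at most its own square.
    have hmem : (4 * E + 1) ∈ {C : ℝ≥0∞ | ∀ f, MemDStar f →
        eDNormSq (compOp σ f) ≤ C ^ 2 * eDNormSq f} := by
      intro h hh
      refine (hcomp h hh).trans ?_
      gcongr
      calc 4 * E ≤ 4 * E + 1 := le_self_add
        _ ≤ (4 * E + 1) ^ 2 := le_self_pow₀ le_add_self (by norm_num)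
    refine ((sInf_le hmem).trans_lt ?_).ne
    exact ENNReal.add_lt_top.2 ⟨ENNReal.mul_lt_top (by simp) hEfin.lt_top, by simp⟩
  · have h1 : ∀ n : ℕ, eDNormSq (fun z => σ z ^ (n + 1) / (Real.sqrt (n + 1) : ℂ)) =
        ∫⁻ z in uD, ENNReal.ofReal
          (‖deriv (fun z => σ z ^ (n + 1) / (Real.sqrt (n + 1) : ℂ)) z‖ ^ 2) ∂nA := by
      intro n
      rw [eDNormSq_eq]
      simp [h0]
    simp only [h1]
    rw [← lintegral_tsum fun n =>
      (((measurable_deriv _).norm.pow_const 2).ennreal_ofReal).aemeasurable]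
    refine ((setLIntegral_mono' hm fun z hz => ?_).trans_lt hEfin.lt_top).ne
    have hs := hnorm z hz
    rw [tsum_deriv_pow (hdiff z hz) hs]
    have hpos : 0 < 1 - ‖σ z‖ ^ 2 := by nlinarith [norm_nonneg (σ z)]
    apply ENNReal.ofReal_le_ofReal
    have h2 := hb z hz
    gcongr
    rw [div_le_iff₀ hpos]
    linarith

/-! ### The symbol `φ_a ∘ exp (-1/f)` -/

/-- The Schwarz–Pick defect identity for the disk automorphism `φ_a`, cleared of denominators. -/
theorem pick_identity (a g : ℂ) :
    ‖1 - (starRingEnd ℂ) a * g‖ ^ 2 - ‖g - a‖ ^ 2 = (1 - ‖a‖ ^ 2) * (1 - ‖g‖ ^ 2) := by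
  simp only [← Complex.normSq_eq_norm_sq, Complex.normSq_apply]
  simp
  ring

theorem norm_exp_neg_inv {w : ℂ} : ‖Complex.exp (-(1 / w))‖ = Real.exp (-(w.re / ‖w‖ ^ 2)) := by
  rw [Complex.norm_exp, one_div, Complex.neg_re, Complex.inv_re, Complex.normSq_eq_norm_sq]

/-- With `u = Re (1/w)`, so that `‖w‖⁻² ≤ u`, this is implied by `u e^{-u} ≤ 1 - e^{-2u}`, which
follows from `u ≤ sinh u`. -/
theorem exp_neg_inv_bound {w : ℂ} (hw : 1 ≤ w.re) :
    ‖Complex.exp (-(1 / w))‖ / ‖w‖ ^ 2 ≤ 1 - ‖Complex.exp (-(1 / w))‖ ^ 2 := by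
  have hw0 : 0 < ‖w‖ := by
    rw [norm_pos_iff]
    rintro rfl
    norm_num at hw
  rw [norm_exp_neg_inv]
  set u := w.re / ‖w‖ ^ 2 with hu
  have hu0 : 0 ≤ u := by positivity
  have h1 : 1 / ‖w‖ ^ 2 ≤ u := by rw [hu]; gcongr
  have h2 := Real.self_le_sinh_iff.2 hu0
  rw [Real.sinh_eq] at h2
  have h3 : Real.exp u * Real.exp (-u) = 1 := by rw [← Real.exp_add]; simp
  have h4 := Real.exp_pos (-u)
  calc Real.exp (-u) / ‖w‖ ^ 2 = Real.exp (-u) * (1 / ‖w‖ ^ 2) := by ring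
    _ ≤ Real.exp (-u) * (2 * u) := by gcongr; linarith
    _ ≤ Real.exp (-u) * (Real.exp u - Real.exp (-u)) := by gcongr; linarith
    _ = 1 - Real.exp (-u) ^ 2 := by linear_combination h3

/- STATEMENT 3 -/
theorem stmt3 (f : ℂ → ℂ) (hf : MemD f) (hre : ∀ z ∈ uD, 1 ≤ (f z).re)
    (a : ℂ) (ha : a = Complex.exp (-(1 / f 0)))
    (σ : ℂ → ℂ)
    (hσ : σ = fun z =>
      (Complex.exp (-(1 / f z)) - a) / (1 - (starRingEnd ℂ) a * Complex.exp (-(1 / f z)))) :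
    IsSchur σ ∧ σ 0 = 0 ∧ MemDStar σ ∧ HilbertSchmidtOnDStar σ := by
  have hlt : ∀ w : ℂ, 1 ≤ w.re → ‖Complex.exp (-(1 / w))‖ < 1 := by
    intro w hw
    have hw0 : w ≠ 0 := by
      rintro rfl
      norm_num at hw
    rw [norm_exp_neg_inv, Real.exp_lt_one_iff, neg_lt_zero]
    have := norm_pos_iff.2 hw0
    positivity
  have ha1 : ‖a‖ < 1 := ha ▸ hlt _ (hre 0 (by simp [uD]))
  have hA : 0 < 1 - ‖a‖ ^ 2 := by nlinarith [norm_nonneg a]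
  have hden : ∀ g : ℂ, ‖g‖ < 1 → 1 - (starRingEnd ℂ) a * g ≠ 0 := by
    intro g hg h
    have h1 : (starRingEnd ℂ) a * g = 1 := (sub_eq_zero.1 h).symm
    have h2 := congrArg norm h1
    rw [norm_mul, RCLike.norm_conj, norm_one] at h2
    nlinarith [norm_nonneg a, norm_nonneg g]
  have hdef : ∀ z ∈ uD, 1 - ‖σ z‖ ^ 2 = (1 - ‖a‖ ^ 2) * (1 - ‖Complex.exp (-(1 / f z))‖ ^ 2) /
      ‖1 - (starRingEnd ℂ) a * Complex.exp (-(1 / f z))‖ ^ 2 := by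
    intro z hz
    have hd := norm_pos_iff.2 (hden _ (hlt _ (hre z hz)))
    rw [← pick_identity, hσ, norm_div, div_pow, sub_div, div_self (by positivity)]
  have hder : ∀ z ∈ uD, HasDerivAt σ
      (Complex.exp (-(1 / f z)) * (deriv f z / f z ^ 2) * (1 - (starRingEnd ℂ) a * a) /
        (1 - (starRingEnd ℂ) a * Complex.exp (-(1 / f z))) ^ 2) z := by
    intro z hz
    have hfz : f z ≠ 0 := by
      intro h
      have := hre z hz
      rw [h] at this
      norm_num at this
    have hfd := (hf.1.differentiableAt (isOpen_ball.mem_nhds hz)).hasDerivAt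
    have hg : HasDerivAt (fun z => Complex.exp (-(1 / f z)))
        (Complex.exp (-(1 / f z)) * (deriv f z / f z ^ 2)) z := by
      simp only [one_div]
      refine HasDerivAt.congr_deriv (hfd.inv hfz).neg.cexp ?_
      rw [Pi.neg_apply, Pi.inv_apply]
      ring
    rw [hσ]
    refine HasDerivAt.congr_deriv ((hg.sub_const a).div
      ((hg.const_mul ((starRingEnd ℂ) a)).const_sub 1) (hden _ (hlt _ (hre z hz)))) ?_
    ring
  have hS : IsSchur σ := by
    refine ⟨fun z hz => (hder z hz).differentiableAt.differentiableWithinAt, fun z hz => ?_⟩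
    have h1 := hdef z hz
    have hg := hlt _ (hre z hz)
    have hd := norm_pos_iff.2 (hden _ hg)
    have h2 : 0 < 1 - ‖Complex.exp (-(1 / f z))‖ ^ 2 := by
      nlinarith [norm_nonneg (Complex.exp (-(1 / f z)))]
    have h3 : 0 < 1 - ‖σ z‖ ^ 2 := by rw [h1]; positivity
    have h4 : ‖σ z‖ < 1 := by nlinarith [norm_nonneg (σ z)]
    simpa [uD] using h4
  have h0 : σ 0 = 0 := by rw [hσ]; simp [ha]
  refine ⟨hS, h0, hilbertSchmidt_of_hyperbolic_deriv hf hS h0 fun z hz => ?_⟩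
  have hd := norm_pos_iff.2 (hden _ (hlt _ (hre z hz)))
  have hn : ‖1 - (starRingEnd ℂ) a * a‖ = 1 - ‖a‖ ^ 2 := by
    rw [← Complex.normSq_eq_conj_mul_self, Complex.normSq_eq_norm_sq, ← Complex.ofReal_one,
      ← Complex.ofReal_sub, Complex.norm_real, Real.norm_of_nonneg hA.le]
  rw [(hder z hz).deriv, hdef z hz, norm_div, norm_mul, norm_mul, norm_div, norm_pow, norm_pow, hn]
  have hb := exp_neg_inv_bound (hre z hz)
  calc _ = (1 - ‖a‖ ^ 2) * (‖Complex.exp (-(1 / f z))‖ / ‖f z‖ ^ 2) /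
        ‖1 - (starRingEnd ℂ) a * Complex.exp (-(1 / f z))‖ ^ 2 * ‖deriv f z‖ := by ring
    _ ≤ _ := by gcongr

end
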